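/- Suppose ξ = σR for R with bounded, almost-everywhere continuous density, and let ξₙ = σₙξ with σₙ → 0 and σₙ = ω(1/n). If the conditional distribution of h(X) given Y = y has an almost-everywhere continuous Lebesgue density for y ∈ {0,1}, then LS-ECE_{π̂,ξₙ}(h) → ECE_π(ρ ∘ h) in probability, where π̂ is the empirical distribution of n i.i.d. samples from π. -/

import Mathlib

open MeasureTheory Filter Set Topology Finset

/-- The expected calibration error `ECE_π(g) = E[|E[Y | g(X)] - g(X)|]`. -/
noncomputable def ECE {α : Type*} [MeasurableSpace α] (π : Measure (α × ℝ)) (g : α → ℝ) : ℝ :=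
  ∫ q, |(π[(fun r : α × ℝ => r.2) |
      MeasurableSpace.comap (fun r : α × ℝ => g r.1) Real.measurableSpace]) q - g q.1| ∂π

/-- The logit-smoothed ECE of a joint distribution `ν` of `(X, Y)` with independent noise
of law `μξ`: `LS-ECE_{ν,ξ}(h) = E[|E[Y | ρ(h(X)+ξ)] − ρ(h(X)+ξ)|]`. -/
noncomputable def LSECE {α : Type*} [MeasurableSpace α] (ν : Measure (α × ℝ))
    (μξ : Measure ℝ) (ρ : ℝ → ℝ) (h : α → ℝ) : ℝ :=
  ∫ q, |((ν.prod μξ)[(fun r : (α × ℝ) × ℝ => r.1.2) |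
      MeasurableSpace.comap (fun r : (α × ℝ) × ℝ => ρ (h r.1.1 + r.2))
        Real.measurableSpace]) q - ρ (h q.1.1 + q.2)| ∂(ν.prod μξ)

/-- The empirical measure of `n` sample points. -/
noncomputable def empMeas {α : Type*} [MeasurableSpace α] {n : ℕ} (s : Fin n → α) :
    Measure α :=
  (n : ENNReal)⁻¹ • ∑ i : Fin n, Measure.dirac (s i)


theorem calib_aux {Ω : Type*} [mΩ : MeasurableSpace Ω] (μ : Measure Ω) [IsFiniteMeasure μ]
    (T Y : Ω → ℝ) (hT : Measurable T) (hYi : Integrable Y μ)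
    (m mY : ℝ → ℝ) (hm : Measurable m) (hm0 : ∀ x, 0 ≤ m x)
    (hmYi : Integrable mY)
    (hmap : μ.map T = volume.withDensity fun x => ENNReal.ofReal (m x))
    (hYB : ∀ B : Set ℝ, MeasurableSet B → ∫ q in T ⁻¹' B, Y q ∂μ = ∫ x in B, mY x)
    (ρ : ℝ → ℝ) (hρ : StrictMono ρ) :
    ∫ q, |(μ[Y | MeasurableSpace.comap (fun q => ρ (T q)) Real.measurableSpace]) q - ρ (T q)| ∂μ
      = ∫ x, |mY x - ρ x * m x| := by
  have hρm : Measurable ρ := hρ.monotone.measurable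
  have hemb : MeasurableEmbedding ρ := hρm.measurableEmbedding hρ.injective
  have hcomap : MeasurableSpace.comap (fun q => ρ (T q)) Real.measurableSpace
      = MeasurableSpace.comap T Real.measurableSpace := by
    have : (fun q => ρ (T q)) = ρ ∘ T := rfl
    rw [this, ← MeasurableSpace.comap_comp, hemb.comap_eq]
  rw [hcomap]
  obtain ⟨g, hg, hgT⟩ := (stronglyMeasurable_condExp (μ := μ) (f := Y)
    (m := MeasurableSpace.comap T Real.measurableSpace)).measurable.exists_eq_measurable_comp
  have hle : MeasurableSpace.comap T Real.measurableSpace ≤ mΩ := hT.comap_le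
  have hgi : Integrable (fun q => g (T q)) μ := by
    have : (fun q => g (T q)) = μ[Y | MeasurableSpace.comap T Real.measurableSpace] := by
      rw [hgT]; rfl
    rw [this]; exact integrable_condExp
  have hmE : Measurable (fun x => ENNReal.ofReal (m x)) := hm.ennreal_ofReal
  have hlt : ∀ᵐ x ∂(volume : Measure ℝ), ENNReal.ofReal (m x) < ⊤ := by simp
  have hgi2 : Integrable (fun x => m x * g x) := by
    have h1 : Integrable g (μ.map T) := by
      rw [integrable_map_measure hg.aestronglyMeasurable hT.aemeasurable]; exact hgi
    rw [hmap, integrable_withDensity_iff_integrable_smul' hmE hlt] at h1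
    simpa [ENNReal.toReal_ofReal (hm0 _)] using h1
  have key : (fun x => m x * g x) =ᵐ[volume] mY := by
    refine hgi2.ae_eq_of_forall_setIntegral_eq _ _ hmYi ?_
    intro B hB _
    rw [← hYB B hB, ← setIntegral_condExp hle hYi ⟨B, hB, rfl⟩, hgT]
    have : ∫ q in T ⁻¹' B, (g ∘ T) q ∂μ = ∫ x in B, g x ∂(μ.map T) := by
      rw [setIntegral_map hB hg.aestronglyMeasurable hT.aemeasurable]; rfl
    rw [this, hmap, restrict_withDensity hB, integral_withDensity_eq_integral_toReal_smul hmE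
      (ae_restrict_of_ae hlt)]
    simp [ENNReal.toReal_ofReal (hm0 _)]
  rw [hgT]
  have : ∫ q, |(g ∘ T) q - ρ (T q)| ∂μ = ∫ x, |g x - ρ x| ∂(μ.map T) := by
    rw [integral_map hT.aemeasurable]; · rfl
    exact (hg.sub hρm).abs.aestronglyMeasurable
  rw [this, hmap, integral_withDensity_eq_integral_toReal_smul hmE hlt]
  refine integral_congr_ae ?_
  filter_upwards [key] with x hx
  rw [← hx, ENNReal.toReal_ofReal (hm0 _), smul_eq_mul]
  have h5 := abs_mul (m x) (g x - ρ x)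
  rw [abs_of_nonneg (hm0 x)] at h5
  rw [← h5]
  congr 1; ring

theorem scheffe_aux {Ω : Type*} [MeasurableSpace Ω] (μ : Measure Ω)
    (F : ℕ → Ω → ℝ) (G : Ω → ℝ) (hF : ∀ n, Measurable (F n)) (hG : Measurable G)
    (hF0 : ∀ n x, 0 ≤ F n x) (hG0 : ∀ x, 0 ≤ G x)
    (hGfin : ∫⁻ x, ENNReal.ofReal (G x) ∂μ ≠ ⊤)
    (heq : ∀ n, ∫⁻ x, ENNReal.ofReal (F n x) ∂μ = ∫⁻ x, ENNReal.ofReal (G x) ∂μ)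
    (hlim : ∀ᵐ x ∂μ, Tendsto (fun n => F n x) atTop (𝓝 (G x))) :
    Tendsto (fun n => ∫⁻ x, ENNReal.ofReal |F n x - G x| ∂μ) atTop (𝓝 0) := by
  have hGi : Integrable G μ := by
    rw [← lintegral_ofReal_ne_top_iff_integrable hG.aestronglyMeasurable (ae_of_all _ hG0)]
    exact hGfin
  have hFi : ∀ n, Integrable (F n) μ := fun n => by
    rw [← lintegral_ofReal_ne_top_iff_integrable (hF n).aestronglyMeasurable (ae_of_all _ (hF0 n)),
      heq n]
    exact hGfin
  have hieq : ∀ n, ∫ x, F n x ∂μ = ∫ x, G x ∂μ := fun n => by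
    rw [integral_eq_lintegral_of_nonneg_ae (ae_of_all _ (hF0 n)) (hF n).aestronglyMeasurable,
      integral_eq_lintegral_of_nonneg_ae (ae_of_all _ hG0) hG.aestronglyMeasurable, heq]
  have h1 : Tendsto (fun n => ∫ x, max (G x - F n x) 0 ∂μ) atTop (𝓝 (∫ x, (0 : ℝ) ∂μ)) := by
    refine tendsto_integral_of_dominated_convergence G
      (fun n => ((hG.sub (hF n)).max measurable_const).aestronglyMeasurable) hGi ?_ ?_
    · intro n
      refine ae_of_all _ fun x => ?_
      rw [Real.norm_of_nonneg (le_max_right _ _)]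
      exact max_le (by linarith [hF0 n x]) (hG0 x)
    · filter_upwards [hlim] with x hx
      have := ((tendsto_const_nhds (x := G x)).sub hx).max (tendsto_const_nhds (x := (0:ℝ)))
      simpa using this
  have h2 : ∀ n, ∫⁻ x, ENNReal.ofReal |F n x - G x| ∂μ
      = ENNReal.ofReal (2 * ∫ x, max (G x - F n x) 0 ∂μ) := fun n => by
    rw [← ofReal_integral_eq_lintegral_ofReal (f := fun x => |F n x - G x|) ((hFi n).sub hGi).abs (ae_of_all _ fun x => abs_nonneg _)]
    congr 1
    have h3 : ∀ x, |F n x - G x| = (F n x - G x) + 2 * max (G x - F n x) 0 := fun x => by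
      rcases le_total (F n x) (G x) with h | h
      · rw [abs_of_nonpos (by linarith), max_eq_left (by linarith)]; ring
      · rw [abs_of_nonneg (by linarith), max_eq_right (by linarith)]; ring
    simp_rw [h3]
    have hmi : Integrable (fun x => max (G x - F n x) 0) μ := (hGi.sub (hFi n)).pos_part
    rw [integral_add (f := fun x => F n x - G x) ((hFi n).sub hGi) (hmi.const_mul 2),
      integral_sub (hFi n) hGi, hieq, sub_self,
      zero_add, integral_const_mul]
  simp_rw [h2]
  have := ENNReal.tendsto_ofReal (h1.const_mul 2)
  simpa using this

theorem conv_eq_aux (pR p : ℝ → ℝ) (σ : ℝ) (hσ : 0 < σ) (t : ℝ) :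
    ∫ x, p x * ((1 / σ) * pR ((t - x) / σ)) = ∫ u, pR u * p (t - σ * u) := by
  have h1 := Measure.integral_comp_mul_left
    (fun v => p (t - v) * ((1 / σ) * pR ((t - (t - v)) / σ))) σ
  have h2 := integral_sub_left_eq_self
    (fun x => p x * ((1 / σ) * pR ((t - x) / σ))) volume t
  rw [h2] at h1
  rw [abs_of_pos (inv_pos.2 hσ), smul_eq_mul] at h1
  have h3 : ∫ x, p x * ((1 / σ) * pR ((t - x) / σ))
      = σ * ∫ u, p (t - σ * u) * ((1 / σ) * pR ((t - (t - σ * u)) / σ)) := by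
    rw [h1]; field_simp
  rw [h3, ← integral_const_mul]
  congr 1; ext u
  have : (t - (t - σ * u)) / σ = u := by field_simp; ring
  rw [this]; field_simp

theorem lint_aux (pR p : ℝ → ℝ) (hpR : Measurable pR) (hp : Measurable p)
    (hpR0 : ∀ x, 0 ≤ pR x)
    (hpR1 : ∫⁻ x, ENNReal.ofReal (pR x) = 1) (σ : ℝ) :
    ∫⁻ z : ℝ × ℝ, ENNReal.ofReal (pR z.2 * p (z.1 - σ * z.2)) ∂(volume.prod volume)
      = ∫⁻ x, ENNReal.ofReal (p x) := by
  rw [lintegral_prod_symm _ (by fun_prop)]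
  have : ∀ u : ℝ, ∫⁻ t, ENNReal.ofReal (pR u * p (t - σ * u))
      = ENNReal.ofReal (pR u) * ∫⁻ x, ENNReal.ofReal (p x) := fun u => by
    simp_rw [ENNReal.ofReal_mul (hpR0 u)]
    rw [lintegral_const_mul _ (by fun_prop)]
    rw [lintegral_sub_right_eq_self (fun t => ENNReal.ofReal (p t))]
  simp_rw [this]
  rw [lintegral_mul_const _ (by fun_prop), hpR1, one_mul]

theorem smooth_aux (pR p : ℝ → ℝ) (hpR : Measurable pR) (hp : Measurable p)
    (hpR0 : ∀ x, 0 ≤ pR x) (hp0 : ∀ x, 0 ≤ p x) (M : ℝ) (hpRM : ∀ x, pR x ≤ M)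
    (hpR1 : ∫⁻ x, ENNReal.ofReal (pR x) = 1)
    (hpfin : ∫⁻ x, ENNReal.ofReal (p x) ≠ ⊤)
    (hpc : ∀ᵐ x ∂(volume : Measure ℝ), ContinuousAt p x)
    (σs : ℕ → ℝ) (hσpos : ∀ n, 0 < σs n) (hσ0 : Tendsto σs atTop (𝓝 0)) :
    Tendsto (fun n => ∫⁻ t, ENNReal.ofReal
      |(∫ x, p x * ((1 / σs n) * pR ((t - x) / σs n))) - p t|) atTop (𝓝 0) := by
  have hpi : Integrable p := by
    rw [← lintegral_ofReal_ne_top_iff_integrable hp.aestronglyMeasurable (ae_of_all _ hp0)]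
    exact hpfin
  have hpRi : Integrable pR := by
    rw [← lintegral_ofReal_ne_top_iff_integrable hpR.aestronglyMeasurable (ae_of_all _ hpR0), hpR1]
    simp
  have hpRint : ∫ x, pR x = 1 := by
    rw [integral_eq_lintegral_of_nonneg_ae (ae_of_all _ hpR0) hpR.aestronglyMeasurable, hpR1]
    simp
  have hS := scheffe_aux (volume.prod volume : Measure (ℝ × ℝ))
    (fun n z => pR z.2 * p (z.1 - σs n * z.2)) (fun z => pR z.2 * p (z.1 - 0 * z.2))
    (fun n => by fun_prop) (by fun_prop)
    (fun n z => mul_nonneg (hpR0 _) (hp0 _)) (fun z => mul_nonneg (hpR0 _) (hp0 _))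
    (by rw [lint_aux pR p hpR hp hpR0 hpR1]; exact hpfin)
    (fun n => by rw [lint_aux pR p hpR hp hpR0 hpR1, lint_aux pR p hpR hp hpR0 hpR1])
    (by
      have h1 := Measure.quasiMeasurePreserving_fst
        (μ := (volume : Measure ℝ)) (ν := (volume : Measure ℝ)) |>.ae hpc
      filter_upwards [h1] with z hz
      refine Tendsto.const_mul _ ?_
      have h2 : Tendsto (fun n => z.1 - σs n * z.2) atTop (𝓝 (z.1 - 0 * z.2)) :=
        tendsto_const_nhds.sub (hσ0.mul_const _)
      have h3 : ContinuousAt p (z.1 - 0 * z.2) := by simpa using hz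
      exact h3.tendsto.comp h2)
  refine tendsto_of_tendsto_of_tendsto_of_le_of_le tendsto_const_nhds hS (fun n => bot_le) ?_
  intro n
  dsimp only
  rw [lintegral_prod _ (by fun_prop)]
  refine lintegral_mono fun t => ?_
  rw [conv_eq_aux pR p _ (hσpos n) t]
  have hi1 : Integrable (fun u => pR u * p (t - σs n * u)) := by
    have : Integrable (fun u => p (t - σs n * u)) :=
      (hpi.comp_sub_left t).comp_mul_left' (hσpos n).ne'
    refine this.bdd_mul (c := M) hpR.aestronglyMeasurable (ae_of_all _ fun x => ?_)
    rw [Real.norm_of_nonneg (hpR0 x)]; exact hpRM x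
  have hi2 : Integrable (fun u => pR u * p (t - 0 * u)) := by
    simpa using hpRi.mul_const (p t)
  have : (∫ u, pR u * p (t - σs n * u)) - p t
      = ∫ u, (pR u * p (t - σs n * u) - pR u * p (t - 0 * u)) := by
    rw [integral_sub hi1 hi2]
    simp [integral_mul_const, hpRint]
  rw [this]
  have h4 := enorm_integral_le_lintegral_enorm (μ := volume)
    (fun u => pR u * p (t - σs n * u) - pR u * p (t - 0 * u))
  simpa only [Real.enorm_eq_ofReal_abs] using h4

open ProbabilityTheory in
theorem var_aux {Ω : Type*} [MeasurableSpace Ω] (μ : Measure Ω) [IsProbabilityMeasure μ]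
    (f : Ω → ℝ) (hf : Measurable f) (hf0 : ∀ x, 0 ≤ f x) (C : ℝ) (hfC : ∀ x, f x ≤ C)
    (n : ℕ) (hn : 0 < n) :
    Integrable (fun s : Fin n → Ω => (1 / (n : ℝ)) * ∑ i, f (s i) - ∫ q, f q ∂μ)
      (Measure.pi fun _ : Fin n => μ) ∧
    Integrable (fun s : Fin n → Ω => ((1 / (n : ℝ)) * ∑ i, f (s i) - ∫ q, f q ∂μ) ^ 2)
      (Measure.pi fun _ : Fin n => μ) ∧
    ∫ s, ((1 / (n : ℝ)) * ∑ i, f (s i) - ∫ q, f q ∂μ) ^ 2 ∂(Measure.pi fun _ : Fin n => μ)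
      ≤ C / n * ∫ q, f q ∂μ ∧
    ∫ s, |(1 / (n : ℝ)) * ∑ i, f (s i) - ∫ q, f q ∂μ| ∂(Measure.pi fun _ : Fin n => μ)
      ≤ 2 * ∫ q, f q ∂μ := by
  have hn' : (n : ℝ) ≠ 0 := by positivity
  set P := (Measure.pi fun _ : Fin n => μ) with hP
  have hmp : ∀ i : Fin n, MeasurePreserving (Function.eval i) P μ :=
    fun i => measurePreserving_eval (fun _ : Fin n => μ) i
  have hfm : ∀ q : ENNReal, MemLp f q μ := fun q => MemLp.of_bound hf.aestronglyMeasurable C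
    (ae_of_all _ fun x => by rw [Real.norm_of_nonneg (hf0 x)]; exact hfC x)
  have hfi : Integrable f μ := memLp_one_iff_integrable.1 (hfm 1)
  have hX : ∀ i : Fin n, MemLp (fun s : Fin n → Ω => f (s i)) 2 P := fun i =>
    (hfm 2).comp_measurePreserving (hmp i)
  have hint : ∀ i : Fin n, ∫ s, f (s i) ∂P = ∫ q, f q ∂μ := fun i => by
    rw [← (hmp i).map_eq, integral_map (hmp i).measurable.aemeasurable hf.aestronglyMeasurable]
  have hmean : ∫ s, (1 / (n : ℝ)) * ∑ i, f (s i) ∂P = ∫ q, f q ∂μ := by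
    rw [integral_const_mul, integral_finsetSum _ (fun i _ => (hX i).integrable (by norm_num))]
    simp_rw [hint]
    simp; field_simp
  have hSm : MemLp (fun s : Fin n → Ω => (1 / (n : ℝ)) * ∑ i, f (s i)) 2 P :=
    (memLp_finsetSum _ (fun i _ => hX i)).const_mul _
  have hZ : MemLp (fun s : Fin n → Ω => (1 / (n : ℝ)) * ∑ i, f (s i) - ∫ q, f q ∂μ) 2 P :=
    hSm.sub (memLp_const _)
  refine ⟨hZ.integrable (by norm_num), hZ.integrable_sq, ?_, ?_⟩
  · have h1 : ∫ s, ((1 / (n : ℝ)) * ∑ i, f (s i) - ∫ q, f q ∂μ) ^ 2 ∂P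
        = Var[fun s : Fin n → Ω => (1 / (n : ℝ)) * ∑ i, f (s i); P] := by
      rw [variance_eq_integral hSm.aemeasurable, hmean]
    rw [h1, variance_const_mul]
    have h2 : Var[fun s : Fin n → Ω => ∑ i, f (s i); P] = ∑ i : Fin n, Var[fun s => f (s i); P] := by
      have := IndepFun.variance_sum (μ := P) (X := fun (i : Fin n) (s : Fin n → Ω) => f (s i))
        (s := Finset.univ) (fun i _ => hX i) (by
          intro i _ j _ hij
          exact (iIndepFun_pi (μ := fun _ : Fin n => μ) (X := fun _ => f)
            (fun i => hf.aemeasurable)).indepFun hij)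
      rw [← this]; congr 1; ext s; simp
    have h3 : ∀ i : Fin n, Var[fun s => f (s i); P] ≤ C * ∫ q, f q ∂μ := fun i => by
      refine (variance_le_expectation_sq (hX i).aestronglyMeasurable).trans ?_
      rw [← hint i, ← integral_const_mul]
      refine integral_mono (hX i).integrable_sq (((hX i).integrable (by norm_num)).const_mul _) ?_
      intro s
      simp only [Pi.pow_apply, pow_two]
      exact mul_le_mul_of_nonneg_right (hfC _) (hf0 _)
    rw [h2]
    calc (1 / (n : ℝ)) ^ 2 * ∑ i : Fin n, Var[fun s => f (s i); P]
        ≤ (1 / (n : ℝ)) ^ 2 * ∑ i : Fin n, (C * ∫ q, f q ∂μ) := by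
          gcongr with i; exact h3 i
      _ = C / n * ∫ q, f q ∂μ := by simp; field_simp
  · have hI0 : 0 ≤ ∫ q, f q ∂μ := integral_nonneg hf0
    calc ∫ s, |(1 / (n : ℝ)) * ∑ i, f (s i) - ∫ q, f q ∂μ| ∂P
        ≤ ∫ s, ((1 / (n : ℝ)) * ∑ i, f (s i) + ∫ q, f q ∂μ) ∂P := by
          refine integral_mono (hZ.integrable (by norm_num)).abs
            ((hSm.integrable (by norm_num)).add (integrable_const _)) fun s => ?_
          have : 0 ≤ (1 / (n : ℝ)) * ∑ i, f (s i) :=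
            mul_nonneg (by positivity) (Finset.sum_nonneg fun i _ => hf0 _)
          exact abs_le.2 ⟨by linarith, by linarith⟩
      _ = 2 * ∫ q, f q ∂μ := by
          rw [integral_add (hSm.integrable (by norm_num)) (integrable_const _), hmean]
          simp; ring

theorem var_aux2 {Ω : Type*} [MeasurableSpace Ω] (μ : Measure Ω) [IsProbabilityMeasure μ]
    (f : Ω → ℝ) (hf : Measurable f) (hf0 : ∀ x, 0 ≤ f x) (C : ℝ) (hfC : ∀ x, f x ≤ C)
    (n : ℕ) (hn : 0 < n) (η : ℝ) (hη : 0 < η) :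
    ∫⁻ s, ENNReal.ofReal |(1 / (n : ℝ)) * ∑ i, f (s i) - ∫ q, f q ∂μ|
        ∂(Measure.pi fun _ : Fin n => μ)
      ≤ ENNReal.ofReal (C / n / (2 * η)) * ENNReal.ofReal (∫ q, f q ∂μ)
        + ENNReal.ofReal (η / 2) ∧
    ∫⁻ s, ENNReal.ofReal |(1 / (n : ℝ)) * ∑ i, f (s i) - ∫ q, f q ∂μ|
        ∂(Measure.pi fun _ : Fin n => μ)
      ≤ 2 * ENNReal.ofReal (∫ q, f q ∂μ) := by
  obtain ⟨h1, h2, h3, h4⟩ := var_aux μ f hf hf0 C hfC n hn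
  have hI0 : 0 ≤ ∫ q, f q ∂μ := integral_nonneg hf0
  obtain ⟨x0⟩ : Nonempty Ω := nonempty_of_isProbabilityMeasure μ
  have hC : 0 ≤ C := (hf0 x0).trans (hfC x0)
  have h1a : Integrable (fun s : Fin n → Ω => |(1 / (n : ℝ)) * ∑ i, f (s i) - ∫ q, f q ∂μ|)
      (Measure.pi fun _ : Fin n => μ) := h1.abs
  rw [← ofReal_integral_eq_lintegral_ofReal h1a (ae_of_all _ fun s => abs_nonneg _)]
  constructor
  · rw [← ENNReal.ofReal_mul (by positivity), ← ENNReal.ofReal_add (by positivity) (by positivity)]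
    apply ENNReal.ofReal_le_ofReal
    calc ∫ s, |(1 / (n : ℝ)) * ∑ i, f (s i) - ∫ q, f q ∂μ| ∂(Measure.pi fun _ : Fin n => μ)
        ≤ ∫ s, (((1 / (n : ℝ)) * ∑ i, f (s i) - ∫ q, f q ∂μ) ^ 2 * (1 / (2 * η)) + η / 2)
            ∂(Measure.pi fun _ : Fin n => μ) := by
          refine integral_mono h1a ((h2.mul_const _).add (integrable_const _)) fun s => ?_
          set Z := (1 / (n : ℝ)) * ∑ i, f (s i) - ∫ q, f q ∂μ
          have : Z ^ 2 * (1 / (2 * η)) + η / 2 - |Z| = (|Z| - η) ^ 2 * (1 / (2 * η)) := by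
            rw [← sq_abs Z]; field_simp; ring
          have h5 : 0 ≤ (|Z| - η) ^ 2 * (1 / (2 * η)) := by positivity
          show |Z| ≤ Z ^ 2 * (1 / (2 * η)) + η / 2
          linarith
      _ ≤ C / n / (2 * η) * ∫ q, f q ∂μ + η / 2 := by
          rw [integral_add (h2.mul_const _) (integrable_const _), integral_mul_const]
          simp only [integral_const, probReal_univ, one_smul]
          have := mul_le_mul_of_nonneg_right h3 (by positivity : 0 ≤ 1 / (2 * η))
          calc _ ≤ _ := add_le_add_left this _
            _ = _ := by ring
  · rw [← ENNReal.ofReal_ofNat 2, ← ENNReal.ofReal_mul (by norm_num)]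
    exact ENNReal.ofReal_le_ofReal h4

theorem emp_meas_aux {Ω : Type*} [MeasurableSpace Ω] (S : Set Ω) (hS : MeasurableSet S)
    (T : Ω → ℝ) (hT : Measurable T) (K p : ℝ → ℝ) (hK : Measurable K) (hp : Measurable p)
    (n : ℕ) : Measurable (fun z : (Fin n → Ω) × ℝ => ENNReal.ofReal
      |(1 / (n : ℝ)) * ∑ i, S.indicator (fun q => K (z.2 - T q)) (z.1 i) - p z.2|) := by
  have h1 : ∀ i : Fin n, Measurable
      (fun z : (Fin n → Ω) × ℝ => S.indicator (fun q => K (z.2 - T q)) (z.1 i)) := fun i => by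
    have h2 : (fun z : (Fin n → Ω) × ℝ => S.indicator (fun q => K (z.2 - T q)) (z.1 i))
        = ((fun z : (Fin n → Ω) × ℝ => z.1 i) ⁻¹' S).indicator (fun z => K (z.2 - T (z.1 i))) := by
      ext z; rfl
    rw [h2]
    refine Measurable.indicator (by fun_prop) (hS.preimage (by fun_prop))
  have h3 := Finset.measurable_fun_sum (Finset.univ : Finset (Fin n)) (fun i _ => h1 i)
  exact (((h3.const_mul _).sub (hp.comp measurable_snd)).abs).ennreal_ofReal

theorem estim_aux {Ω : Type*} [MeasurableSpace Ω] (μ : Measure Ω) [IsProbabilityMeasure μ]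
    (S : Set Ω) (hS : MeasurableSet S) (T : Ω → ℝ) (hT : Measurable T)
    (pR p : ℝ → ℝ) (hpR : Measurable pR) (hp : Measurable p)
    (hpR0 : ∀ x, 0 ≤ pR x) (hp0 : ∀ x, 0 ≤ p x) (M : ℝ) (hpRM : ∀ x, pR x ≤ M)
    (hpR1 : ∫⁻ x, ENNReal.ofReal (pR x) = 1)
    (hpc : ∀ᵐ x ∂(volume : Measure ℝ), ContinuousAt p x)
    (hmap : (μ.restrict S).map T = volume.withDensity fun x => ENNReal.ofReal (p x))
    (σs : ℕ → ℝ) (hσpos : ∀ n, 0 < σs n) (hσ0 : Tendsto σs atTop (𝓝 0))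
    (hσω : Tendsto (fun n : ℕ => (n : ℝ) * σs n) atTop atTop) :
    Tendsto (fun n : ℕ => ∫⁻ s, ∫⁻ t, ENNReal.ofReal
      |(1 / (n : ℝ)) * ∑ i, S.indicator (fun q => (1 / σs n) * pR ((t - T q) / σs n)) (s i) - p t|
      ∂volume ∂(Measure.pi fun _ : Fin n => μ)) atTop (𝓝 0) := by
  set ν : Measure ℝ := volume.withDensity fun x => ENNReal.ofReal (p x) with hν
  have hνfin : IsFiniteMeasure ν := by rw [← hmap]; infer_instance
  have hpfin : ∫⁻ x, ENNReal.ofReal (p x) ≠ ⊤ := by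
    have : ν univ ≠ ⊤ := measure_ne_top _ _
    rwa [hν, withDensity_apply _ MeasurableSet.univ, Measure.restrict_univ] at this
  have hM : 0 ≤ M := (hpR0 0).trans (hpRM 0)
  set g : ℕ → ℝ → ℝ := fun n t => ∫ x, p x * ((1 / σs n) * pR ((t - x) / σs n)) with hg
  have hsm := smooth_aux pR p hpR hp hpR0 hp0 M hpRM hpR1 hpfin hpc σs hσpos hσ0
  set D : ℕ → ENNReal := fun n => ∫⁻ t, ENNReal.ofReal |g n t - p t| with hD
  change Tendsto D atTop (𝓝 0) at hsm
  have hgm : ∀ n, Measurable (g n) := fun n => by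
    have : StronglyMeasurable (fun t => ∫ x, p x * ((1 / σs n) * pR ((t - x) / σs n))) := by
      apply StronglyMeasurable.integral_prod_right
        (f := fun t x => p x * ((1 / σs n) * pR ((t - x) / σs n)))
      exact Measurable.stronglyMeasurable (by fun_prop)
    exact this.measurable
  have hgmean : ∀ n t, ∫ q, S.indicator (fun q => (1 / σs n) * pR ((t - T q) / σs n)) q ∂μ
      = g n t := fun n t => by
    rw [integral_indicator hS]
    have h1 : ∫ q in S, (1 / σs n) * pR ((t - T q) / σs n) ∂μ
        = ∫ x, (1 / σs n) * pR ((t - x) / σs n) ∂((μ.restrict S).map T) := by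
      rw [integral_map hT.aemeasurable (Measurable.aestronglyMeasurable (by fun_prop))]
    rw [h1, hmap, hν, integral_withDensity_eq_integral_toReal_smul (by fun_prop) (by simp)]
    simp [ENNReal.toReal_ofReal (hp0 _), hg]
  have hgle : ∀ n t, ENNReal.ofReal (g n t)
      ≤ ENNReal.ofReal (p t) + ENNReal.ofReal |g n t - p t| := fun n t => by
    rw [← ENNReal.ofReal_add (hp0 t) (abs_nonneg _)]
    exact ENNReal.ofReal_le_ofReal (by linarith [le_abs_self (g n t - p t)])
  -- the main bound
  have hbound : ∀ n : ℕ, 0 < n → ∀ B : Set ℝ, MeasurableSet B → ∀ η : ℝ, 0 < η →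
      ∫⁻ s, ∫⁻ t, ENNReal.ofReal
        |(1 / (n : ℝ)) * ∑ i, S.indicator (fun q => (1 / σs n) * pR ((t - T q) / σs n)) (s i)
          - p t| ∂volume ∂(Measure.pi fun _ : Fin n => μ)
      ≤ ENNReal.ofReal (M / σs n / n / (2 * η)) * ((∫⁻ x, ENNReal.ofReal (p x)) + D n)
        + ENNReal.ofReal (η / 2) * volume B + 2 * ν Bᶜ + 3 * D n := by
    intro n hn B hB η hη
    have hσn := hσpos n
    have hKm : Measurable (fun y => (1 / σs n) * pR (y / σs n)) := by fun_prop
    have hvar := fun t => var_aux2 μ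
      (S.indicator (fun q => (1 / σs n) * pR ((t - T q) / σs n)))
      (Measurable.indicator (by fun_prop) hS)
      (fun q => Set.indicator_nonneg (fun q _ => mul_nonneg (by positivity) (hpR0 _)) q)
      (M / σs n)
      (fun q => by
        refine Set.indicator_le' (g := fun _ => M / σs n) (fun q _ => ?_) (fun q _ => ?_) q
        · rw [div_eq_mul_one_div M, mul_comm]
          exact mul_le_mul_of_nonneg_right (hpRM _) (by positivity)
        · positivity)
      n hn η hη
    simp only [hgmean] at hvar
    have hmeas1 := emp_meas_aux S hS T hT _ p hKm hp n
    have hmeas2 := emp_meas_aux S hS T hT _ (g n) hKm (hgm n) n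
    set E : ℝ → ENNReal := fun t => ∫⁻ s, ENNReal.ofReal
        |(1 / (n : ℝ)) * ∑ i, S.indicator (fun q => (1 / σs n) * pR ((t - T q) / σs n)) (s i)
          - g n t| ∂(Measure.pi fun _ : Fin n => μ) with hE
    have step1 : ∫⁻ s, ∫⁻ t, ENNReal.ofReal
        |(1 / (n : ℝ)) * ∑ i, S.indicator (fun q => (1 / σs n) * pR ((t - T q) / σs n)) (s i)
          - p t| ∂volume ∂(Measure.pi fun _ : Fin n => μ) ≤ (∫⁻ t, E t) + D n := by
      rw [lintegral_lintegral_swap hmeas1.aemeasurable, hD]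
      have hm3 : Measurable (fun t => ENNReal.ofReal |g n t - p t|) :=
        ((hgm n).sub hp).abs.ennreal_ofReal
      rw [← lintegral_add_right _ hm3]
      refine lintegral_mono fun t => ?_
      have : ENNReal.ofReal |g n t - p t|
          = ∫⁻ s, ENNReal.ofReal |g n t - p t| ∂(Measure.pi fun _ : Fin n => μ) := by simp
      rw [this, hE]
      dsimp only
      rw [← lintegral_add_right _ measurable_const]
      refine lintegral_mono fun s => ?_
      dsimp only
      rw [← ENNReal.ofReal_add (abs_nonneg _) (abs_nonneg _)]
      exact ENNReal.ofReal_le_ofReal (abs_sub_le _ _ _)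
    have step2 : ∫⁻ t in B, E t ≤
        ENNReal.ofReal (M / σs n / n / (2 * η)) * ((∫⁻ x, ENNReal.ofReal (p x)) + D n)
        + ENNReal.ofReal (η / 2) * volume B := by
      calc ∫⁻ t in B, E t
          ≤ ∫⁻ t in B, (ENNReal.ofReal (M / σs n / n / (2 * η)) * ENNReal.ofReal (g n t)
              + ENNReal.ofReal (η / 2)) := lintegral_mono fun t => (hvar t).1
        _ = ENNReal.ofReal (M / σs n / n / (2 * η)) * (∫⁻ t in B, ENNReal.ofReal (g n t))
            + ENNReal.ofReal (η / 2) * volume B := by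
            rw [lintegral_add_right _ measurable_const, lintegral_const_mul _ (hgm n).ennreal_ofReal]
            simp
        _ ≤ _ := by
            gcongr
            refine (setLIntegral_le_lintegral _ _).trans ?_
            rw [hD, ← lintegral_add_left hp.ennreal_ofReal]
            exact lintegral_mono (hgle n)
    have step3 : ∫⁻ t in Bᶜ, E t ≤ 2 * ν Bᶜ + 2 * D n := by
      calc ∫⁻ t in Bᶜ, E t ≤ ∫⁻ t in Bᶜ, 2 * (ENNReal.ofReal (p t)
            + ENNReal.ofReal |g n t - p t|) :=
            lintegral_mono fun t => (hvar t).2.trans (by gcongr; exact hgle n t)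
        _ = 2 * ν Bᶜ + 2 * ∫⁻ t in Bᶜ, ENNReal.ofReal |g n t - p t| := by
            rw [lintegral_const_mul' _ _ (by simp), lintegral_add_left hp.ennreal_ofReal, mul_add,
              hν, withDensity_apply _ hB.compl]
        _ ≤ _ := by
            gcongr
            exact setLIntegral_le_lintegral _ _
    refine step1.trans ?_
    rw [← lintegral_add_compl E hB]
    calc _ ≤ _ := add_le_add (add_le_add step2 step3) le_rfl
      _ = _ := by ring
  rw [ENNReal.tendsto_nhds_zero]
  intro δ hδ
  obtain ⟨B, -, hBc, hBt⟩ := MeasurableSet.univ.exists_isCompact_sdiff_lt (μ := ν)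
    (measure_ne_top _ _) (ε := δ / 6) (by simp [hδ.ne'])
  have hB : MeasurableSet B := hBc.measurableSet
  rw [← Set.compl_eq_univ_sdiff] at hBt
  have hBv : volume B ≠ ⊤ := hBc.measure_lt_top.ne
  obtain ⟨η, hη1, hη⟩ : ∃ η : ℝ, ENNReal.ofReal (η / 2) * volume B ≤ δ / 3 ∧ 0 < η := by
    have h1 : Tendsto (fun η : ℝ => ENNReal.ofReal (η / 2) * volume B) (𝓝[>] 0) (𝓝 0) := by
      have h2 : Tendsto (fun η : ℝ => ENNReal.ofReal (η / 2)) (𝓝 0) (𝓝 0) := by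
        have : Continuous (fun η : ℝ => ENNReal.ofReal (η / 2)) :=
          ENNReal.continuous_ofReal.comp (by fun_prop)
        simpa using this.tendsto 0
      have h3 := ENNReal.Tendsto.mul_const (b := volume B) h2 (Or.inr hBv)
      rw [zero_mul] at h3
      exact h3.mono_left nhdsWithin_le_nhds
    rw [ENNReal.tendsto_nhds_zero] at h1
    exact ((h1 (δ / 3) (by simp [hδ.ne'])).and self_mem_nhdsWithin).exists
  have hc : Tendsto (fun n : ℕ => ENNReal.ofReal (M / σs n / n / (2 * η))) atTop (𝓝 0) := by
    have h1 : Tendsto (fun n : ℕ => M / (2 * η) / ((n : ℝ) * σs n)) atTop (𝓝 0) :=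
      hσω.const_div_atTop _
    have h2 := ENNReal.tendsto_ofReal h1
    rw [ENNReal.ofReal_zero] at h2
    refine h2.congr fun n => ?_
    congr 1
    rw [div_div, div_div, div_div]; congr 1; ring
  have hlim : Tendsto (fun n : ℕ => ENNReal.ofReal (M / σs n / n / (2 * η)) *
      ((∫⁻ x, ENNReal.ofReal (p x)) + D n) + 3 * D n) atTop (𝓝 0) := by
    have h1 := ENNReal.Tendsto.mul hc (Or.inr (by simpa using hpfin))
      (hsm.const_add (∫⁻ x, ENNReal.ofReal (p x))) (Or.inr (by simp))
    have h2 := ENNReal.Tendsto.const_mul (a := 3) hsm (Or.inr (by simp))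
    simpa using h1.add h2
  rw [ENNReal.tendsto_nhds_zero] at hlim
  filter_upwards [hlim (δ / 3) (by simp [hδ.ne']), eventually_gt_atTop 0] with n hn hn0
  refine (hbound n hn0 B hB η hη).trans ?_
  have h6 : 2 * ν Bᶜ ≤ δ / 3 := by
    have h7 : 2 * ν Bᶜ ≤ 2 * (δ / 6) := by gcongr
    refine h7.trans (le_of_eq ?_)
    rw [show (6 : ENNReal) = 2 * 3 by norm_num, div_eq_mul_inv, div_eq_mul_inv,
      ENNReal.mul_inv (by simp) (by simp), ← mul_assoc, ← mul_assoc, mul_comm 2 δ, mul_assoc δ,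
      ENNReal.mul_inv_cancel (by simp) (by simp), mul_one]
  calc _ = (ENNReal.ofReal (M / σs n / n / (2 * η)) *
      ((∫⁻ x, ENNReal.ofReal (p x)) + D n) + 3 * D n) + ENNReal.ofReal (η / 2) * volume B
        + 2 * ν Bᶜ := by ring
    _ ≤ δ / 3 + δ / 3 + δ / 3 := add_le_add (add_le_add hn hη1) h6
    _ = δ := ENNReal.add_thirds δ

theorem map_of_real_aux {Ω : Type*} [MeasurableSpace Ω] (μ : Measure Ω) [IsFiniteMeasure μ]
    (T : Ω → ℝ) (hT : Measurable T) (m : ℝ → ℝ) (hm0 : ∀ x, 0 ≤ m x) (hmi : Integrable m)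
    (hB : ∀ B : Set ℝ, MeasurableSet B → ∫ q in T ⁻¹' B, (1 : ℝ) ∂μ = ∫ x in B, m x) :
    μ.map T = volume.withDensity fun x => ENNReal.ofReal (m x) := by
  ext B hBm
  rw [Measure.map_apply hT hBm, withDensity_apply _ hBm,
    ← ofReal_integral_eq_lintegral_ofReal hmi.integrableOn (ae_of_all _ hm0), ← hB B hBm]
  simp [Measure.real]

theorem emp_prod_aux {α : Type*} [MeasurableSpace α] {n : ℕ} (s : Fin n → α × ℝ)
    (μξ : Measure ℝ) [SFinite μξ] :
    (empMeas s).prod μξ = (n : ENNReal)⁻¹ • ∑ i : Fin n, μξ.map (Prod.mk (s i)) := by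
  ext B hB
  rw [Measure.prod_apply hB, empMeas, lintegral_smul_measure, lintegral_finsetSum_measure,
    Measure.smul_apply, Measure.finsetSum_apply]
  congr 1
  refine Finset.sum_congr rfl fun i _ => ?_
  rw [lintegral_dirac' _ (measurable_measure_prodMk_left hB), Measure.map_apply (by fun_prop) hB]

theorem emp_int_aux {α : Type*} [MeasurableSpace α] (h : α → ℝ) (hh : Measurable h)
    (K : ℝ → ℝ) (hK : Measurable K) (hK0 : ∀ x, 0 ≤ K x) (hKi : Integrable K)
    {n : ℕ} (hn : 0 < n) (s : Fin n → α × ℝ) (φ : α × ℝ → ℝ) (hφ : Measurable φ) :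
    Integrable (fun r : (α × ℝ) × ℝ => φ r.1)
      ((empMeas s).prod (volume.withDensity fun x => ENNReal.ofReal (K x))) ∧
    ∀ B : Set ℝ, MeasurableSet B →
      ∫ r in (fun r : (α × ℝ) × ℝ => h r.1.1 + r.2) ⁻¹' B, φ r.1
        ∂((empMeas s).prod (volume.withDensity fun x => ENNReal.ofReal (K x)))
      = ∫ t in B, (1 / (n : ℝ)) * ∑ i, φ (s i) * K (t - h (s i).1) := by
  have hKfin : IsFiniteMeasure (volume.withDensity fun x => ENNReal.ofReal (K x)) :=
    isFiniteMeasure_withDensity_ofReal hKi.2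
  have hnE : (n : ENNReal)⁻¹ ≠ ⊤ := by simp [hn.ne']
  rw [emp_prod_aux]
  have hi : ∀ i : Fin n, Integrable (fun r : (α × ℝ) × ℝ => φ r.1)
      ((volume.withDensity fun x => ENNReal.ofReal (K x)).map (Prod.mk (s i))) := fun i => by
    rw [integrable_map_measure (Measurable.aestronglyMeasurable (by fun_prop))
      (Measurable.aemeasurable (by fun_prop))]
    exact integrable_const (φ (s i))
  refine ⟨(integrable_finsetSum_measure.2 fun i _ => hi i).smul_measure hnE, ?_⟩
  intro B hB
  have hTm : Measurable (fun r : (α × ℝ) × ℝ => h r.1.1 + r.2) := by fun_prop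
  rw [← integral_indicator (hTm hB), integral_smul_measure, integral_finsetSum_measure
    (fun i _ => (hi i).indicator (hTm hB)), integral_const_mul,
    integral_finsetSum _ (fun i _ => ((hKi.comp_sub_right _).const_mul _).integrableOn)]
  rw [ENNReal.toReal_inv, ENNReal.toReal_natCast, smul_eq_mul, one_div]
  congr 1
  refine Finset.sum_congr rfl fun i _ => ?_
  rw [integral_map (Measurable.aemeasurable (by fun_prop))
    ((Measurable.indicator (by fun_prop) (hTm hB)).aestronglyMeasurable),
    integral_withDensity_eq_integral_toReal_smul (by fun_prop) (by simp),
    ← integral_indicator hB,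
    ← integral_add_left_eq_self
      (B.indicator fun t => φ (s i) * K (t - h (s i).1)) (h (s i).1)]
  congr 1; ext x
  rw [ENNReal.toReal_ofReal (hK0 _), smul_eq_mul]
  by_cases hx : h (s i).1 + x ∈ B
  · rw [Set.indicator_of_mem hx, Set.indicator_of_mem (by exact hx), add_sub_cancel_left, mul_comm]
  · rw [Set.indicator_of_notMem hx, Set.indicator_of_notMem (by exact hx), mul_zero]

theorem lsece_aux {α : Type*} [MeasurableSpace α] (h : α → ℝ) (hh : Measurable h)
    (K : ℝ → ℝ) (hK : Measurable K) (hK0 : ∀ x, 0 ≤ K x) (hKi : Integrable K)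
    {n : ℕ} (hn : 0 < n) (s : Fin n → α × ℝ) (ρ : ℝ → ℝ) (hρ : StrictMono ρ) :
    LSECE (empMeas s) (volume.withDensity fun x => ENNReal.ofReal (K x)) ρ h
      = ∫ t, |(1 / (n : ℝ)) * ∑ i, (s i).2 * K (t - h (s i).1)
          - ρ t * ((1 / (n : ℝ)) * ∑ i, K (t - h (s i).1))| := by
  have hKfin : IsFiniteMeasure (volume.withDensity fun x => ENNReal.ofReal (K x)) :=
    isFiniteMeasure_withDensity_ofReal hKi.2
  have hempfin : IsFiniteMeasure (empMeas s) := by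
    refine ⟨?_⟩
    simp only [empMeas, Measure.smul_apply, Measure.finsetSum_apply, measure_univ, smul_eq_mul]
    simp only [Finset.sum_const, Finset.card_univ, Fintype.card_fin, nsmul_eq_mul, mul_one]
    rw [ENNReal.inv_mul_cancel (by simp [hn.ne']) (by simp)]
    simp
  have hTm : Measurable (fun r : (α × ℝ) × ℝ => h r.1.1 + r.2) := by fun_prop
  have hYY := emp_int_aux h hh K hK hK0 hKi hn s (fun q => q.2) measurable_snd
  have h1 := emp_int_aux h hh K hK hK0 hKi hn s (fun _ => 1) measurable_const
  have hmi : Integrable (fun t => (1 / (n : ℝ)) * ∑ i, K (t - h (s i).1)) :=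
    (integrable_finsetSum _ (fun i _ => hKi.comp_sub_right _)).const_mul _
  have hm0 : ∀ t, 0 ≤ (1 / (n : ℝ)) * ∑ i, K (t - h (s i).1) := fun t =>
    mul_nonneg (by positivity) (Finset.sum_nonneg fun i _ => hK0 _)
  unfold LSECE
  refine calib_aux _ (fun r : (α × ℝ) × ℝ => h r.1.1 + r.2) (fun r => r.1.2) hTm hYY.1
    (fun t => (1 / (n : ℝ)) * ∑ i, K (t - h (s i).1))
    (fun t => (1 / (n : ℝ)) * ∑ i, (s i).2 * K (t - h (s i).1)) (by fun_prop) hm0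
    ((integrable_finsetSum _ (fun i _ => (hKi.comp_sub_right _).const_mul _)).const_mul _)
    (map_of_real_aux _ _ hTm _ hm0 hmi ?_) hYY.2 ρ hρ
  intro B hB
  have := h1.2 B hB
  simpa only [one_mul] using this

/-- Let `ξₙ = σₙ R` with `R` having a bounded, a.e. continuous density,
`σₙ → 0`, `σₙ = ω(1/n)`. If the conditional law of `h(X)` given `Y = y` has an a.e.
continuous Lebesgue density for `y ∈ {0,1}`, then `LS-ECE_{π̂,ξₙ}(h) → ECE_π(ρ ∘ h)` in
probability, where `π̂` is the empirical measure of `n` i.i.d. samples from `π`. -/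
theorem stmt18 {α : Type*} [MeasurableSpace α]
    (π : Measure (α × ℝ)) [IsProbabilityMeasure π]
    (hY : ∀ᵐ q ∂π, q.2 = 0 ∨ q.2 = 1)
    (h : α → ℝ) (hh : Measurable h)
    (pR : ℝ → ℝ) (hpRMeas : Measurable pR) (hpRNonneg : ∀ x, 0 ≤ pR x)
    (hpRInt : ∫ x, pR x = 1) (M : ℝ) (hpRBdd : ∀ x, pR x ≤ M)
    (hpRCont : ∀ᵐ x ∂(volume : Measure ℝ), ContinuousAt pR x)
    (ρ ρinv : ℝ → ℝ) (hρMono : StrictMono ρ) (hρRange : ∀ x, ρ x ∈ Set.Icc (0 : ℝ) 1)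
    (hρinv : ∀ x, ρinv (ρ x) = x) (hρinvDiff : DifferentiableOn ℝ ρinv (Set.Ioo 0 1))
    (p0 p1 : ℝ → ℝ) (hp0Meas : Measurable p0) (hp1Meas : Measurable p1)
    (hp0Nonneg : ∀ x, 0 ≤ p0 x) (hp1Nonneg : ∀ x, 0 ≤ p1 x)
    (hp0Cont : ∀ᵐ x ∂(volume : Measure ℝ), ContinuousAt p0 x)
    (hp1Cont : ∀ᵐ x ∂(volume : Measure ℝ), ContinuousAt p1 x)
    (hcond0 : (π.restrict {q : α × ℝ | q.2 = 0}).map (fun q => h q.1) =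
      volume.withDensity fun x => ENNReal.ofReal (p0 x))
    (hcond1 : (π.restrict {q : α × ℝ | q.2 = 1}).map (fun q => h q.1) =
      volume.withDensity fun x => ENNReal.ofReal (p1 x))
    (σs : ℕ → ℝ) (hσpos : ∀ n, 0 < σs n) (hσ0 : Tendsto σs atTop (𝓝 0))
    (hσω : Tendsto (fun n : ℕ => (n : ℝ) * σs n) atTop atTop) :
    ∀ ε : ℝ, 0 < ε →
      Tendsto (fun n : ℕ =>
          (Measure.pi fun _ : Fin n => π)
            {s : Fin n → α × ℝ |
              ε ≤ |LSECE (empMeas s)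
                    (volume.withDensity fun x =>
                      ENNReal.ofReal ((1/(σs n)) * pR (x/(σs n)))) ρ h
                  - ECE π (fun x => ρ (h x))|})
        atTop (𝓝 0) := by
  intro ε hε
  have hpRi : Integrable pR := by
    by_contra hcon
    rw [integral_undef hcon] at hpRInt
    exact zero_ne_one hpRInt
  have hpR1 : ∫⁻ x, ENNReal.ofReal (pR x) = 1 := by
    rw [← ofReal_integral_eq_lintegral_ofReal hpRi (ae_of_all _ hpRNonneg), hpRInt]
    simp
  have hTm : Measurable (fun q : α × ℝ => h q.1) := by fun_prop
  have hS0 : MeasurableSet {q : α × ℝ | q.2 = 0} := measurableSet_eq_fun measurable_snd measurable_const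
  have hS1 : MeasurableSet {q : α × ℝ | q.2 = 1} := measurableSet_eq_fun measurable_snd measurable_const
  have hint : ∀ (S : Set (α × ℝ)) (p : ℝ → ℝ), Measurable p → (∀ x, 0 ≤ p x) →
      (π.restrict S).map (fun q => h q.1) = volume.withDensity (fun x => ENNReal.ofReal (p x)) →
      Integrable p := by
    intro S p hp hp0 hm
    rw [← lintegral_ofReal_ne_top_iff_integrable hp.aestronglyMeasurable (ae_of_all _ hp0)]
    have : ((π.restrict S).map (fun q => h q.1)) Set.univ ≠ ⊤ := measure_ne_top _ _
    rwa [hm, withDensity_apply _ MeasurableSet.univ, Measure.restrict_univ] at this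
  have hp0i := hint _ p0 hp0Meas hp0Nonneg hcond0
  have hp1i := hint _ p1 hp1Meas hp1Nonneg hcond1
  have hρm : Measurable ρ := hρMono.monotone.measurable
  have hYind : (fun q : α × ℝ => q.2) =ᵐ[π] {q : α × ℝ | q.2 = 1}.indicator (fun _ => (1 : ℝ)) := by
    filter_upwards [hY] with q hq
    rcases hq with hq | hq <;> simp [Set.indicator, hq]
  -- the population functional
  have hECE : ECE π (fun x => ρ (h x)) = ∫ t, |p1 t - ρ t * (p0 t + p1 t)| := by
    unfold ECE
    refine calib_aux π (fun q => h q.1) (fun q => q.2) hTm ?_ (fun t => p0 t + p1 t) p1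
      (hp0Meas.add hp1Meas) (fun x => add_nonneg (hp0Nonneg x) (hp1Nonneg x)) hp1i ?_ ?_ ρ hρMono
    · exact ((integrable_const (1 : ℝ)).indicator hS1).congr hYind.symm
    · have hcompl : π.restrict {q : α × ℝ | q.2 = 0}
          = π.restrict {q : α × ℝ | q.2 = 1}ᶜ := by
        refine Measure.restrict_congr_set ?_
        filter_upwards [hY] with q hq
        apply propext
        change q.2 = 0 ↔ ¬ (q.2 = 1)
        rcases hq with hq | hq <;> simp [hq]
      have hsplit : π = π.restrict {q : α × ℝ | q.2 = 0} + π.restrict {q : α × ℝ | q.2 = 1} := by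
        rw [hcompl, add_comm, Measure.restrict_add_restrict_compl hS1]
      conv_lhs => rw [hsplit]
      rw [Measure.map_add _ _ hTm, hcond0, hcond1, ← withDensity_add_left hp0Meas.ennreal_ofReal]
      congr 1; ext x
      simp only [Pi.add_apply]
      rw [ENNReal.ofReal_add (hp0Nonneg x) (hp1Nonneg x)]
    · intro B hB
      rw [integral_congr_ae (ae_restrict_of_ae hYind), integral_indicator hS1,
        Measure.restrict_restrict hS1,
        integral_eq_lintegral_of_nonneg_ae (ae_of_all _ hp1Nonneg) hp1Meas.aestronglyMeasurable,
        ← withDensity_apply _ hB, ← hcond1, Measure.map_apply hTm hB,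
        Measure.restrict_apply (hTm hB), Set.inter_comm]
      simp [Measure.real]
  set L0 : (n : ℕ) → (Fin n → α × ℝ) → ENNReal := fun n s => ∫⁻ t, ENNReal.ofReal
      |(1 / (n : ℝ)) * ∑ i, {q : α × ℝ | q.2 = 0}.indicator
        (fun q => (1 / σs n) * pR ((t - h q.1) / σs n)) (s i) - p0 t| with hL0
  set L1 : (n : ℕ) → (Fin n → α × ℝ) → ENNReal := fun n s => ∫⁻ t, ENNReal.ofReal
      |(1 / (n : ℝ)) * ∑ i, {q : α × ℝ | q.2 = 1}.indicator
        (fun q => (1 / σs n) * pR ((t - h q.1) / σs n)) (s i) - p1 t| with hL1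
  have ht0 : Tendsto (fun n => ∫⁻ s, L0 n s ∂(Measure.pi fun _ : Fin n => π)) atTop (𝓝 0) :=
    estim_aux π _ hS0 _ hTm pR p0 hpRMeas hp0Meas hpRNonneg hp0Nonneg M hpRBdd hpR1 hp0Cont hcond0
      σs hσpos hσ0 hσω
  have ht1 : Tendsto (fun n => ∫⁻ s, L1 n s ∂(Measure.pi fun _ : Fin n => π)) atTop (𝓝 0) :=
    estim_aux π _ hS1 _ hTm pR p1 hpRMeas hp1Meas hpRNonneg hp1Nonneg M hpRBdd hpR1 hp1Cont hcond1
      σs hσpos hσ0 hσω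
  have hKm : ∀ n, Measurable (fun y => (1 / σs n) * pR (y / σs n)) := fun n => by fun_prop
  have hL0m : ∀ n, Measurable (L0 n) := fun n =>
    (emp_meas_aux _ hS0 _ hTm _ p0 (hKm n) hp0Meas n).lintegral_prod_right'
  have hL1m : ∀ n, Measurable (L1 n) := fun n =>
    (emp_meas_aux _ hS1 _ hTm _ p1 (hKm n) hp1Meas n).lintegral_prod_right'
  -- pointwise comparison
  have hcmp : ∀ n : ℕ, 0 < n → ∀ s : Fin n → α × ℝ, (∀ i, (s i).2 = 0 ∨ (s i).2 = 1) →
      ENNReal.ofReal |LSECE (empMeas s)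
                    (volume.withDensity fun x =>
                      ENNReal.ofReal ((1/(σs n)) * pR (x/(σs n)))) ρ h
                  - ECE π (fun x => ρ (h x))| ≤ L0 n s + L1 n s := by
    intro n hn s hs
    have hσn := hσpos n
    have hKi : Integrable (fun y => (1 / σs n) * pR (y / σs n)) :=
      (hpRi.comp_div hσn.ne').const_mul _
    have hK0 : ∀ y, 0 ≤ (1 / σs n) * pR (y / σs n) := fun y =>
      mul_nonneg (by positivity) (hpRNonneg _)
    rw [lsece_aux h hh _ (hKm n) hK0 hKi hn s ρ hρMono, hECE]
    set K : ℝ → ℝ := fun y => (1 / σs n) * pR (y / σs n) with hKdef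
    set mY : ℝ → ℝ := fun t => (1 / (n : ℝ)) * ∑ i, (s i).2 * K (t - h (s i).1) with hmY
    set m : ℝ → ℝ := fun t => (1 / (n : ℝ)) * ∑ i, K (t - h (s i).1) with hm
    have hρb : ∀ f : ℝ → ℝ, Integrable f → Integrable (fun t => ρ t * f t) := fun f hf =>
      hf.bdd_mul (c := 1) hρm.aestronglyMeasurable (ae_of_all _ fun x => by
        rw [Real.norm_of_nonneg (hρRange x).1]; exact (hρRange x).2)
    have hmYi : Integrable mY :=
      (integrable_finsetSum _ (fun i _ => (hKi.comp_sub_right _).const_mul _)).const_mul _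
    have hmi : Integrable m :=
      (integrable_finsetSum _ (fun i _ => hKi.comp_sub_right _)).const_mul _
    have hi1 : Integrable (fun t => |mY t - ρ t * m t|) := (hmYi.sub (hρb m hmi)).abs
    have hi2 : Integrable (fun t => |p1 t - ρ t * (p0 t + p1 t)|) :=
      (hp1i.sub (hρb _ (hp0i.add hp1i))).abs
    have e1 : ∀ t, (1 / (n : ℝ)) * ∑ i, {q : α × ℝ | q.2 = 1}.indicator
        (fun q => (1 / σs n) * pR ((t - h q.1) / σs n)) (s i) = mY t := fun t => by
      simp only [hmY]
      congr 1
      refine Finset.sum_congr rfl fun i _ => ?_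
      rcases hs i with hq | hq <;> simp [Set.indicator, hq, hKdef]
    have e0 : ∀ t, (1 / (n : ℝ)) * ∑ i, {q : α × ℝ | q.2 = 0}.indicator
        (fun q => (1 / σs n) * pR ((t - h q.1) / σs n)) (s i) = m t - mY t := fun t => by
      simp only [hmY, hm]
      rw [← mul_sub, ← Finset.sum_sub_distrib]
      congr 1
      refine Finset.sum_congr rfl fun i _ => ?_
      rcases hs i with hq | hq <;> simp [Set.indicator, hq, hKdef]
    simp only [hL0, hL1]
    simp_rw [e1, e0]
    change ENNReal.ofReal |(∫ t, |mY t - ρ t * m t|) - (∫ t, |p1 t - ρ t * (p0 t + p1 t)|)| ≤ _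
    rw [← integral_sub hi1 hi2, ← Real.enorm_eq_ofReal_abs]
    refine (enorm_integral_le_lintegral_enorm _).trans ?_
    have hmYm : Measurable mY := by fun_prop
    have hmm : Measurable (fun t => ENNReal.ofReal |mY t - p1 t|) :=
      (hmYm.sub hp1Meas).abs.ennreal_ofReal
    rw [← lintegral_add_right _ hmm]
    refine lintegral_mono fun t => ?_
    dsimp only
    rw [Real.enorm_eq_ofReal_abs, ← ENNReal.ofReal_add (abs_nonneg _) (abs_nonneg _)]
    refine ENNReal.ofReal_le_ofReal ?_
    refine (abs_abs_sub_abs_le_abs_sub _ _).trans ?_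
    have h1 := (hρRange t).1
    have h2 := (hρRange t).2
    have e3 : mY t - ρ t * m t - (p1 t - ρ t * (p0 t + p1 t))
        = (1 - ρ t) * (mY t - p1 t) + (- ρ t) * (m t - mY t - p0 t) := by ring
    rw [e3]
    refine (abs_add_le _ _).trans ?_
    rw [abs_mul, abs_mul, abs_neg, abs_of_nonneg h1, abs_of_nonneg (by linarith : 0 ≤ 1 - ρ t)]
    have a1 := abs_nonneg (mY t - p1 t)
    have a2 := abs_nonneg (m t - mY t - p0 t)
    nlinarith
  have hfinal : Tendsto (fun n : ℕ => ((∫⁻ s, L0 n s ∂(Measure.pi fun _ : Fin n => π)) +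
      ∫⁻ s, L1 n s ∂(Measure.pi fun _ : Fin n => π)) / ENNReal.ofReal ε) atTop (𝓝 0) := by
    have := ENNReal.Tendsto.div_const (ht0.add ht1) (b := ENNReal.ofReal ε)
      (Or.inr (by simpa using hε))
    simpa using this
  refine tendsto_of_tendsto_of_tendsto_of_le_of_le' tendsto_const_nhds hfinal
    (Eventually.of_forall fun n => bot_le) ?_
  filter_upwards [eventually_gt_atTop 0] with n hn
  rw [← lintegral_add_left (hL0m n)]
  refine le_trans ?_ (meas_ge_le_lintegral_div ((hL0m n).add (hL1m n)).aemeasurable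
    (by simpa using hε) (by simp))
  refine measure_mono_ae ?_
  have hall : ∀ᵐ s ∂(Measure.pi fun _ : Fin n => π), ∀ i, (s i).2 = 0 ∨ (s i).2 = 1 := by
    rw [ae_all_iff]
    intro i
    exact (measurePreserving_eval (fun _ : Fin n => π) i).quasiMeasurePreserving.ae hY
  filter_upwards [hall] with s hs hmem
  exact (ENNReal.ofReal_le_ofReal hmem).trans (hcmp n hn s hs)
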